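/- If p > 1, 1/p + 1/q = 1, and f″ ∈ L_p[a,b], then |τ(x;α,β)| ≤ (‖f″‖_p/(2·(2q+1)^{1/q}·(α+β)))·[ (α^q/(x−a)^q)·{(x−a−h(b−a)/2)^{2q+1} + (h(b−a)/2)^{2q+1}} + (β^q/(b−x)^q)·{(b−h(b−a)/2−x)^{2q+1} + (h(b−a)/2)^{2q+1}} ]^{1/q}, where ‖f″‖_p = (∫_a^b |f″(t)|^p dt)^{1/p}. -/

import Mathlib

open MeasureTheory intervalIntegral

/-- Integral mean of `f` over `[c,d]`. -/
noncomputable def intMean (f : ℝ → ℝ) (c d : ℝ) : ℝ :=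
  (1 / (d - c)) * ∫ t in c..d, f t

/-- The functional τ(x; α, β) of the paper (with parameter h). -/
noncomputable def tau (a b h α β : ℝ) (f f' : ℝ → ℝ) (x : ℝ) : ℝ :=
  (1 / (2 * (α + β))) * ((α / (x - a)) * (x - a - h * (b - a) / 2) ^ 2
      - (β / (b - x)) * (x - b + h * (b - a) / 2) ^ 2) * f' x
  - (1 / (α + β)) * ((α / (x - a)) * (x - a - h * (b - a) / 2)
      - (β / (b - x)) * (x - b + h * (b - a) / 2)) * f x
  - (h * (b - a) / (2 * (α + β))) * ((α / (x - a)) * f a + (β / (b - x)) * f b)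
  + (h ^ 2 * (b - a) ^ 2 / (8 * (α + β))) * ((β / (b - x)) * f' b - (α / (x - a)) * f' a)
  + (1 / (α + β)) * (α * intMean f a x + β * intMean f x b)

/-!
On each of `[a, x]` and `[x, b]`, integrating a quadratic `(t - m) ^ 2` twice by parts against `f''`
produces the boundary terms and the mean of `f` appearing in `τ`; the knots `m = a + h(b - a)/2` and
`m = b - h(b - a)/2` are the ones that match its coefficients. Hence `2(α + β) τ` is the integral
over `[a, b]` of `f''` against a Peano kernel made of two weighted quadratics, and Hölder's
inequality reduces the bound to the `L^q` norm of that kernel, which is explicit.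
-/

section Primitive

open Set

variable {a b c d : ℝ} {f f' f'' g g' u u' u'' : ℝ → ℝ}

/-- `g` is an indefinite integral of `g'` on the interval with endpoints `a` and `b`, that is, `g`
is absolutely continuous there with almost everywhere derivative `g'`. All pairs of base points are
allowed so that the notion visibly restricts to subintervals. -/
structure IsPrimitiveOn (g g' : ℝ → ℝ) (a b : ℝ) : Prop where
  intervalIntegrable : IntervalIntegrable g' volume a b
  eq_add_integral : ∀ s ∈ uIcc a b, ∀ t ∈ uIcc a b, g t = g s + ∫ r in s..t, g' r

namespace IsPrimitiveOn

lemma of_eq_left_add_integral (hg' : IntervalIntegrable g' volume a b)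
    (hg : ∀ t ∈ uIcc a b, g t = g a + ∫ r in a..t, g' r) : IsPrimitiveOn g g' a b where
  intervalIntegrable := hg'
  eq_add_integral s hs t ht := by
    have h_as : IntervalIntegrable g' volume a s := hg'.mono_set (uIcc_subset_uIcc_left hs)
    have h_st : IntervalIntegrable g' volume s t := hg'.mono_set (uIcc_subset_uIcc hs ht)
    rw [hg s hs, hg t ht, add_assoc, integral_add_adjacent_intervals h_as h_st]

lemma of_hasDerivAt (hg : ∀ t ∈ uIcc a b, HasDerivAt g (g' t) t)
    (hg' : IntervalIntegrable g' volume a b) : IsPrimitiveOn g g' a b :=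
  of_eq_left_add_integral hg' fun t ht ↦ by
    have h_at : uIcc a t ⊆ uIcc a b := uIcc_subset_uIcc_left ht
    rw [integral_eq_sub_of_hasDerivAt (fun r hr ↦ hg r (h_at hr)) (hg'.mono_set h_at),
      add_sub_cancel]

lemma mono (hg : IsPrimitiveOn g g' a b) (h : uIcc c d ⊆ uIcc a b) : IsPrimitiveOn g g' c d where
  intervalIntegrable := hg.intervalIntegrable.mono_set h
  eq_add_integral s hs t ht := hg.eq_add_integral s (h hs) t (h ht)

lemma absolutelyContinuousOnInterval (hg : IsPrimitiveOn g g' a b) :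
    AbsolutelyContinuousOnInterval g a b := by
  have h_prim : AbsolutelyContinuousOnInterval (fun t ↦ ∫ r in a..t, g' r) a b :=
    hg.intervalIntegrable.absolutelyContinuousOnInterval_intervalIntegral left_mem_uIcc
  refine Filter.Tendsto.congr' ?_ h_prim
  filter_upwards [Filter.mem_inf_of_right (Filter.mem_principal_self _)] with I hI
  refine Finset.sum_congr rfl fun i hi ↦ ?_
  obtain ⟨hi₁, hi₂⟩ := hI.1 i hi
  rw [hg.eq_add_integral a left_mem_uIcc _ hi₁, hg.eq_add_integral a left_mem_uIcc _ hi₂,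
    dist_add_left]

lemma ae_hasDerivAt (hg : IsPrimitiveOn g g' a b) :
    ∀ᵐ t, t ∈ uIoo a b → HasDerivAt g (g' t) t := by
  filter_upwards [hg.intervalIntegrable.ae_hasDerivAt_integral] with t h_deriv ht
  have h_prim : HasDerivAt (fun s ↦ g a + ∫ r in a..s, g' r) (g' t) t :=
    (h_deriv (uIoo_subset_uIcc_self ht) a left_mem_uIcc).const_add (g a)
  refine h_prim.congr_of_eventuallyEq ?_
  filter_upwards [isOpen_Ioo.mem_nhds ht] with s hs
  exact hg.eq_add_integral a left_mem_uIcc s (uIoo_subset_uIcc_self hs)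

lemma ae_deriv_eq (hg : IsPrimitiveOn g g' a b) : ∀ᵐ t, t ∈ uIoc a b → deriv g t = g' t := by
  filter_upwards [hg.ae_hasDerivAt, volume.ae_ne (max a b)] with t h_deriv h_ne ht
  exact (h_deriv ⟨ht.1, ht.2.lt_of_ne h_ne⟩).deriv

lemma integral_mul_deriv_eq_deriv_mul (hu : IsPrimitiveOn u u' a b) (hg : IsPrimitiveOn g g' a b) :
    ∫ t in a..b, u t * g' t = u b * g b - u a * g a - ∫ t in a..b, u' t * g t := by
  have h_left : ∫ t in a..b, u t * deriv g t = ∫ t in a..b, u t * g' t :=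
    integral_congr_ae <| hg.ae_deriv_eq.mono fun t h ht ↦ by rw [h ht]
  have h_right : ∫ t in a..b, deriv u t * g t = ∫ t in a..b, u' t * g t :=
    integral_congr_ae <| hu.ae_deriv_eq.mono fun t h ht ↦ by rw [h ht]
  rw [← h_left, ← h_right]
  exact hu.absolutelyContinuousOnInterval.integral_mul_deriv_eq_deriv_mul
    hg.absolutelyContinuousOnInterval

lemma integral_mul_deriv_deriv_eq (hu : IsPrimitiveOn u u' a b) (hu' : IsPrimitiveOn u' u'' a b)
    (hf : IsPrimitiveOn f f' a b) (hf' : IsPrimitiveOn f' f'' a b) :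
    ∫ t in a..b, u t * f'' t =
      u b * f' b - u a * f' a - (u' b * f b - u' a * f a) + ∫ t in a..b, u'' t * f t := by
  rw [hu.integral_mul_deriv_eq_deriv_mul hf', hu'.integral_mul_deriv_eq_deriv_mul hf]
  ring

lemma integral_sq_sub_mul_deriv_deriv_eq (m : ℝ) (hf : IsPrimitiveOn f f' a b)
    (hf' : IsPrimitiveOn f' f'' a b) :
    ∫ t in a..b, (t - m) ^ 2 * f'' t =
      (b - m) ^ 2 * f' b - (a - m) ^ 2 * f' a - 2 * ((b - m) * f b - (a - m) * f a)
        + 2 * ∫ t in a..b, f t := by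
  have h_sq : IsPrimitiveOn (fun t ↦ (t - m) ^ 2) (fun t ↦ 2 * (t - m)) a b :=
    of_hasDerivAt (fun t _ ↦ by simpa using ((hasDerivAt_id' t).sub_const m).fun_pow 2)
      (Continuous.intervalIntegrable (by fun_prop) a b)
  have h_lin : IsPrimitiveOn (fun t ↦ 2 * (t - m)) (fun _ ↦ 2) a b :=
    of_hasDerivAt (fun t _ ↦ by simpa using ((hasDerivAt_id' t).sub_const m).const_mul 2)
      intervalIntegrable_const
  rw [h_sq.integral_mul_deriv_deriv_eq h_lin hf hf', intervalIntegral.integral_const_mul]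
  ring

end IsPrimitiveOn

end Primitive

section PiecewiseIntegral

open Set

variable {E : Type*} [NormedAddCommGroup E] {μ : Measure ℝ} {a b x : ℝ} {F G : ℝ → E}

lemma eqOn_ite_le_left {β : Type*} {F G : ℝ → β} (hax : a ≤ x) :
    EqOn F (fun t ↦ if t ≤ x then F t else G t) (uIoc a x) := fun _ ht ↦
  (if_pos (uIoc_of_le hax ▸ ht).2).symm

lemma eqOn_ite_le_right {β : Type*} {F G : ℝ → β} (hxb : x ≤ b) :
    EqOn G (fun t ↦ if t ≤ x then F t else G t) (uIoc x b) := fun _ ht ↦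
  (if_neg (uIoc_of_le hxb ▸ ht).1.not_ge).symm

lemma intervalIntegrable_ite_le (hax : a ≤ x) (hxb : x ≤ b) (hF : IntervalIntegrable F μ a x)
    (hG : IntervalIntegrable G μ x b) :
    IntervalIntegrable (fun t ↦ if t ≤ x then F t else G t) μ a b :=
  (hF.congr (eqOn_ite_le_left hax)).trans (hG.congr (eqOn_ite_le_right hxb))

lemma integral_ite_le [NormedSpace ℝ E] (hax : a ≤ x) (hxb : x ≤ b)
    (hF : IntervalIntegrable F μ a x) (hG : IntervalIntegrable G μ x b) :
    ∫ t in a..b, (if t ≤ x then F t else G t) ∂μ = (∫ t in a..x, F t ∂μ) + ∫ t in x..b, G t ∂μ := by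
  have h_left := eqOn_ite_le_left (F := F) (G := G) hax
  have h_right := eqOn_ite_le_right (F := F) (G := G) hxb
  rw [← integral_add_adjacent_intervals (hF.congr h_left) (hG.congr h_right),
    integral_congr_ae_restrict (h_left.aeEq_restrict measurableSet_uIoc),
    integral_congr_ae_restrict (h_right.aeEq_restrict measurableSet_uIoc)]

end PiecewiseIntegral

section Hoelder

open Set

variable {E : Type*} [NormedAddCommGroup E] {μ : Measure ℝ} {a b p q : ℝ}

lemma memLp_restrict_Ioc_of_intervalIntegrable_norm_rpow {u : ℝ → E} (hab : a ≤ b)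
    (hp : 0 < p) (hu : AEStronglyMeasurable u (μ.restrict (Ioc a b)))
    (h : IntervalIntegrable (fun t ↦ ‖u t‖ ^ p) μ a b) :
    MemLp u (ENNReal.ofReal p) (μ.restrict (Ioc a b)) := by
  rw [← integrable_norm_rpow_iff hu (by simpa using hp) ENNReal.ofReal_ne_top,
    ENNReal.toReal_ofReal hp.le]
  exact (intervalIntegrable_iff_integrableOn_Ioc_of_le hab).1 h

lemma abs_integral_mul_le_Lp_mul_Lq {u v : ℝ → ℝ} (hab : a ≤ b) (hpq : p.HolderConjugate q)
    (hu : MemLp u (ENNReal.ofReal p) (μ.restrict (Ioc a b)))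
    (hv : MemLp v (ENNReal.ofReal q) (μ.restrict (Ioc a b))) :
    |∫ t in a..b, u t * v t ∂μ| ≤
      (∫ t in a..b, |u t| ^ p ∂μ) ^ (1 / p) * (∫ t in a..b, |v t| ^ q ∂μ) ^ (1 / q) := by
  simp only [integral_of_le hab]
  calc |∫ t in Ioc a b, u t * v t ∂μ| ≤ ∫ t in Ioc a b, |u t| * |v t| ∂μ := by
        simpa only [Real.norm_eq_abs, abs_mul] using
          norm_integral_le_integral_norm (fun t ↦ u t * v t)
    _ ≤ _ := integral_mul_norm_le_Lp_mul_Lq hpq hu hv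

end Hoelder

section AbsPower

open Set

variable {a b m q r : ℝ}

lemma intervalIntegrable_abs_sub_rpow (hr : -1 < r) :
    IntervalIntegrable (fun t ↦ |t - m| ^ r) volume a b := by
  have h_pos : ∀ c, 0 < c → IntervalIntegrable (fun s ↦ |s| ^ r) volume 0 c := fun c hc ↦
    (intervalIntegrable_rpow' hr).congr fun s hs ↦ by
      rw [uIoc_of_le hc.le] at hs
      simp only [abs_of_pos hs.1]
  have h_even : IntervalIntegrable (fun s ↦ |s| ^ r) volume (a - m) (b - m) :=
    intervalIntegrable_of_even (fun s ↦ by rw [abs_neg]) h_pos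
  simpa only [sub_add_cancel] using h_even.comp_sub_right m

lemma integral_abs_sub_rpow (ham : a ≤ m) (hmb : m ≤ b) (hr : -1 < r) :
    ∫ t in a..b, |t - m| ^ r = ((b - m) ^ (r + 1) + (m - a) ^ (r + 1)) / (r + 1) := by
  have h_left : ∫ t in a..m, |t - m| ^ r = (m - a) ^ (r + 1) / (r + 1) := by
    calc ∫ t in a..m, |t - m| ^ r = ∫ t in a..m, (m - t) ^ r := integral_congr fun t ht ↦ by
          rw [uIcc_of_le ham] at ht
          simp only [abs_sub_comm t m, abs_of_nonneg (sub_nonneg.2 ht.2)]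
      _ = ∫ s in 0..(m - a), s ^ r := by
          rw [integral_comp_sub_left (fun s ↦ s ^ r), sub_self]
      _ = (m - a) ^ (r + 1) / (r + 1) := by
          rw [integral_rpow (.inl hr), Real.zero_rpow (by linarith), sub_zero]
  have h_right : ∫ t in m..b, |t - m| ^ r = (b - m) ^ (r + 1) / (r + 1) := by
    calc ∫ t in m..b, |t - m| ^ r = ∫ t in m..b, (t - m) ^ r := integral_congr fun t ht ↦ by
          rw [uIcc_of_le hmb] at ht
          simp only [abs_of_nonneg (sub_nonneg.2 ht.1)]
      _ = ∫ s in 0..(b - m), s ^ r := by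
          rw [integral_comp_sub_right (fun s ↦ s ^ r), sub_self]
      _ = (b - m) ^ (r + 1) / (r + 1) := by
          rw [integral_rpow (.inl hr), Real.zero_rpow (by linarith), sub_zero]
  rw [← integral_add_adjacent_intervals (intervalIntegrable_abs_sub_rpow hr)
    (intervalIntegrable_abs_sub_rpow hr), h_left, h_right, add_comm, add_div]

lemma abs_mul_sq_rpow (k s : ℝ) : |k * s ^ 2| ^ q = |k| ^ q * |s| ^ (2 * q) := by
  rw [abs_mul, abs_pow, Real.mul_rpow (abs_nonneg k) (by positivity), Real.rpow_mul (abs_nonneg s),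
    Real.rpow_two]

end AbsPower

section Kernel

open Set

/-- The Peano kernel of a three-point quadrature rule with second-order remainder on both sides of
`x`: a weighted quadratic with knot `m₁` up to `x` and one with knot `m₂` beyond it. -/
noncomputable def sqKernel (x k₁ m₁ k₂ m₂ t : ℝ) : ℝ :=
  if t ≤ x then k₁ * (t - m₁) ^ 2 else k₂ * (t - m₂) ^ 2

variable {a b x k₁ m₁ k₂ m₂ p q : ℝ} {f f' f'' g : ℝ → ℝ}

lemma measurable_sqKernel : Measurable (sqKernel x k₁ m₁ k₂ m₂) :=
  Measurable.ite measurableSet_Iic (by fun_prop) (by fun_prop)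

lemma abs_sqKernel_rpow (t : ℝ) : |sqKernel x k₁ m₁ k₂ m₂ t| ^ q =
    if t ≤ x then |k₁| ^ q * |t - m₁| ^ (2 * q) else |k₂| ^ q * |t - m₂| ^ (2 * q) := by
  unfold sqKernel
  split_ifs <;> exact abs_mul_sq_rpow _ _

lemma intervalIntegrable_abs_sqKernel_rpow (hax : a ≤ x) (hxb : x ≤ b) (hq : -1 < 2 * q) :
    IntervalIntegrable (fun t ↦ |sqKernel x k₁ m₁ k₂ m₂ t| ^ q) volume a b := by
  simp only [abs_sqKernel_rpow]
  exact intervalIntegrable_ite_le hax hxb ((intervalIntegrable_abs_sub_rpow hq).const_mul _)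
    ((intervalIntegrable_abs_sub_rpow hq).const_mul _)

lemma integral_abs_sqKernel_rpow (ham₁ : a ≤ m₁) (hm₁x : m₁ ≤ x) (hxm₂ : x ≤ m₂) (hm₂b : m₂ ≤ b)
    (hq : -1 < 2 * q) :
    ∫ t in a..b, |sqKernel x k₁ m₁ k₂ m₂ t| ^ q =
      (|k₁| ^ q * ((x - m₁) ^ (2 * q + 1) + (m₁ - a) ^ (2 * q + 1))
        + |k₂| ^ q * ((m₂ - x) ^ (2 * q + 1) + (b - m₂) ^ (2 * q + 1))) / (2 * q + 1) := by
  simp only [abs_sqKernel_rpow]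
  rw [integral_ite_le (ham₁.trans hm₁x) (hxm₂.trans hm₂b)
      ((intervalIntegrable_abs_sub_rpow hq).const_mul _)
      ((intervalIntegrable_abs_sub_rpow hq).const_mul _),
    intervalIntegral.integral_const_mul, intervalIntegral.integral_const_mul,
    integral_abs_sub_rpow ham₁ hm₁x hq, integral_abs_sub_rpow hxm₂ hm₂b hq]
  ring

lemma integral_sqKernel_mul (hax : a ≤ x) (hxb : x ≤ b)
    (hg : IntervalIntegrable g volume a b) :
    ∫ t in a..b, sqKernel x k₁ m₁ k₂ m₂ t * g t =
      k₁ * (∫ t in a..x, (t - m₁) ^ 2 * g t) + k₂ * ∫ t in x..b, (t - m₂) ^ 2 * g t := by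
  have hx : x ∈ uIcc a b := uIcc_of_le (hax.trans hxb) ▸ ⟨hax, hxb⟩
  have h_left : IntervalIntegrable (fun t ↦ k₁ * (t - m₁) ^ 2 * g t) volume a x :=
    (hg.mono_set (uIcc_subset_uIcc_left hx)).continuousOn_mul (by fun_prop)
  have h_right : IntervalIntegrable (fun t ↦ k₂ * (t - m₂) ^ 2 * g t) volume x b :=
    (hg.mono_set (uIcc_subset_uIcc_right hx)).continuousOn_mul (by fun_prop)
  simp only [sqKernel, ite_mul]
  rw [integral_ite_le hax hxb h_left h_right]
  simp only [mul_assoc, intervalIntegral.integral_const_mul]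

lemma abs_integral_sqKernel_mul_le (ham₁ : a ≤ m₁) (hm₁x : m₁ ≤ x) (hxm₂ : x ≤ m₂)
    (hm₂b : m₂ ≤ b) (hpq : p.HolderConjugate q) (hg : IntervalIntegrable g volume a b)
    (hgp : IntervalIntegrable (fun t ↦ |g t| ^ p) volume a b) :
    |∫ t in a..b, sqKernel x k₁ m₁ k₂ m₂ t * g t| ≤
      (∫ t in a..b, |g t| ^ p) ^ (1 / p) / (2 * q + 1) ^ (1 / q) *
        (|k₁| ^ q * ((x - m₁) ^ (2 * q + 1) + (m₁ - a) ^ (2 * q + 1))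
          + |k₂| ^ q * ((m₂ - x) ^ (2 * q + 1) + (b - m₂) ^ (2 * q + 1))) ^ (1 / q) := by
  have hax : a ≤ x := ham₁.trans hm₁x
  have hxb : x ≤ b := hxm₂.trans hm₂b
  have hab : a ≤ b := hax.trans hxb
  have hq : 0 < q := hpq.symm.pos
  have h_kernel : MemLp (sqKernel x k₁ m₁ k₂ m₂) (ENNReal.ofReal q) (volume.restrict (Ioc a b)) :=
    memLp_restrict_Ioc_of_intervalIntegrable_norm_rpow hab hq
      measurable_sqKernel.aestronglyMeasurable
      (intervalIntegrable_abs_sqKernel_rpow hax hxb (by linarith))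
  have h_g : MemLp g (ENNReal.ofReal p) (volume.restrict (Ioc a b)) :=
    memLp_restrict_Ioc_of_intervalIntegrable_norm_rpow hab hpq.pos hg.1.aestronglyMeasurable hgp
  have h_hoelder := abs_integral_mul_le_Lp_mul_Lq hab hpq.symm h_kernel h_g
  have h_nonneg : 0 ≤ |k₁| ^ q * ((x - m₁) ^ (2 * q + 1) + (m₁ - a) ^ (2 * q + 1))
      + |k₂| ^ q * ((m₂ - x) ^ (2 * q + 1) + (b - m₂) ^ (2 * q + 1)) := by
    rw [← sub_nonneg] at ham₁ hm₁x hxm₂ hm₂b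
    positivity
  rw [integral_abs_sqKernel_rpow ham₁ hm₁x hxm₂ hm₂b (by linarith),
    Real.div_rpow h_nonneg (by positivity)] at h_hoelder
  exact h_hoelder.trans_eq (by ring)

lemma tau_eq_integral_sqKernel_mul (h α β : ℝ) (hax : a ≤ x) (hxb : x ≤ b)
    (hf : IsPrimitiveOn f f' a b) (hf' : IsPrimitiveOn f' f'' a b) :
    tau a b h α β f f' x = 1 / (2 * (α + β)) * ∫ t in a..b,
      sqKernel x (α / (x - a)) (a + h * (b - a) / 2) (β / (b - x)) (b - h * (b - a) / 2) t
        * f'' t := by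
  have hx : x ∈ uIcc a b := uIcc_of_le (hax.trans hxb) ▸ ⟨hax, hxb⟩
  have h_left := uIcc_subset_uIcc_left hx
  have h_right := uIcc_subset_uIcc_right hx
  rw [integral_sqKernel_mul hax hxb hf'.intervalIntegrable,
    (hf.mono h_left).integral_sq_sub_mul_deriv_deriv_eq _ (hf'.mono h_left),
    (hf.mono h_right).integral_sq_sub_mul_deriv_deriv_eq _ (hf'.mono h_right)]
  simp only [tau, intMean, div_eq_mul_inv, mul_inv]
  ring

end Kernel

theorem stmt_2 (a b h α β x p q : ℝ) (f f' f'' : ℝ → ℝ)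
    (hab : a < b)
    (hh : h ∈ Set.Icc (0 : ℝ) 1)
    (hα : 0 ≤ α) (hβ : 0 ≤ β) (hαβ : 0 < α + β)
    (hax : a < x) (hxb : x < b)
    (hx1 : a + h * (b - a) / 2 ≤ x) (hx2 : x ≤ b - h * (b - a) / 2)
    (hfd : ∀ t ∈ Set.Icc a b, HasDerivAt f (f' t) t)
    (hf''int : IntervalIntegrable f'' MeasureTheory.volume a b)
    (hac : ∀ t ∈ Set.Icc a b, f' t = f' a + ∫ u in a..t, f'' u)
    (hp : 1 < p) (hpq : 1 / p + 1 / q = 1)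
    (hLp : IntervalIntegrable (fun t => |f'' t| ^ p) MeasureTheory.volume a b)
    :
    |tau a b h α β f f' x| ≤
      ((∫ t in a..b, |f'' t| ^ p) ^ (1 / p) / (2 * (2 * q + 1) ^ (1 / q) * (α + β))) *
      ((α ^ q / (x - a) ^ q) *
          ((x - a - h * (b - a) / 2) ^ (2 * q + 1) + (h * (b - a) / 2) ^ (2 * q + 1))
        + (β ^ q / (b - x) ^ q) *
          ((b - h * (b - a) / 2 - x) ^ (2 * q + 1) + (h * (b - a) / 2) ^ (2 * q + 1))) ^ (1 / q) := by
  have h_conj : p.HolderConjugate q := Real.holderConjugate_iff.2 ⟨hp, by simpa using hpq⟩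
  have hxa : 0 ≤ x - a := sub_nonneg.2 hax.le
  have hbx : 0 ≤ b - x := sub_nonneg.2 hxb.le
  have hw : 0 ≤ h * (b - a) / 2 := by have := hh.1; have := sub_pos.2 hab; positivity
  rw [← Set.uIcc_of_le hab.le] at hfd hac
  have hf' : IsPrimitiveOn f' f'' a b := .of_eq_left_add_integral hf''int hac
  have hf : IsPrimitiveOn f f' a b :=
    .of_hasDerivAt hfd hf'.absolutelyContinuousOnInterval.continuousOn.intervalIntegrable
  have h_bound := abs_integral_sqKernel_mul_le (k₁ := α / (x - a)) (k₂ := β / (b - x))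
    (le_add_of_nonneg_right hw) hx1 hx2 (sub_le_self b hw) h_conj hf''int hLp
  rw [abs_of_nonneg (div_nonneg hα hxa), abs_of_nonneg (div_nonneg hβ hbx), Real.div_rpow hα hxa,
    Real.div_rpow hβ hbx, add_sub_cancel_left, sub_sub_cancel, ← sub_sub] at h_bound
  rw [tau_eq_integral_sqKernel_mul h α β hax.le hxb.le hf hf', abs_mul, abs_of_pos (by positivity)]
  refine (mul_le_mul_of_nonneg_left h_bound (by positivity)).trans_eq ?_
  simp only [div_eq_mul_inv, mul_inv]
  ring
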